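/- (Contiguous relation for the Askey-Wilson integral) Let 0<q<1 and a,b,c,d∈ℂ with |a|,|b|,|c|,|d|<1. Then I_{a,b,c,d} = ((1-abcd)/((1-ab)(1-ac)(1-ad))) · I_{qa,b,c,d}. -/

import Mathlib

/-!
The weight satisfies `w_{qa,b,c,d}(z) = (1 - az)(1 - a/z) w_{a,b,c,d}(z)`, so the claim says that
`((1-ab)(1-ac)(1-ad) - (1-abcd)(1-az)(1-a/z)) w_{a,b,c,d}(z) / z` has integral zero over the unit
circle. This combination is a `q`-difference: it equals `a (G(z) - G(qz)) / z` with

`G(z) = z (z², q z⁻²;q)_∞ / (az, bz, cz, dz, qa/z, qb/z, qc/z, qd/z;q)_∞`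

(`AWG` below; the identity is `AWw_contiguous`). Since `|a|,|b|,|c|,|d| < 1`, the function `G` is
holomorphic in a neighbourhood of the closed annulus `q ≤ |z| ≤ 1`, so `G(z)/z` has the same
integral over `|z| = 1` and over `|z| = q`; rescaling the latter circle gives the integral of
`G(qz)/z` over `|z| = 1` (`circleIntegral_AWG`).
-/

noncomputable section

/-- The infinite q-shifted factorial `(a;q)_∞`. -/
def qpi (q a : ℂ) : ℂ := ∏' j : ℕ, (1 - a * q ^ j)

/-- The Askey-Wilson weight
`w_{a,b,c,d}(z) = (z²,z^{-2};q)_∞ / (az,az^{-1},bz,bz^{-1},cz,cz^{-1},dz,dz^{-1};q)_∞`. -/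
def AWw (q a b c d z : ℂ) : ℂ :=
  qpi q (z ^ 2) * qpi q (z⁻¹ ^ 2) /
    (qpi q (a * z) * qpi q (a * z⁻¹) * qpi q (b * z) * qpi q (b * z⁻¹) *
      qpi q (c * z) * qpi q (c * z⁻¹) * qpi q (d * z) * qpi q (d * z⁻¹))

/-- The Askey-Wilson integral `I_{a,b,c,d} = (2πi)⁻¹ ∮_{|z|=1} w_{a,b,c,d}(z) dz/z`. -/
def AWI (q a b c d : ℂ) : ℂ :=
  (2 * (Real.pi : ℂ) * Complex.I)⁻¹ * circleIntegral (fun z => AWw q a b c d z / z) 0 1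

lemma summable_qpi {q : ℂ} (hq : ‖q‖ < 1) (x : ℂ) : Summable fun j : ℕ => ‖-(x * q ^ j)‖ := by
  simpa using (summable_geometric_of_lt_one (norm_nonneg q) hq).mul_left ‖x‖

lemma qpi_rec {q : ℂ} (hq : ‖q‖ < 1) (x : ℂ) : qpi q x = (1 - x) * qpi q (q * x) := by
  have h := multipliable_one_add_of_summable (summable_qpi hq (q * x))
  unfold qpi
  rw [tprod_eq_zero_mul']
  · simp only [pow_zero, mul_one]
    congr 1
    refine tprod_congr fun j => ?_
    ring
  · refine h.congr fun j => ?_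
    ring

lemma qpi_ne_zero {q x : ℂ} (hq : ‖q‖ < 1) (hx : ‖x‖ < 1) : qpi q x ≠ 0 := by
  have := tprod_one_add_ne_zero_of_summable (f := fun j : ℕ => -(x * q ^ j)) (fun j => ?_)
    (summable_qpi hq x)
  · simpa [qpi, sub_eq_add_neg] using this
  · intro h
    have h1 : x * q ^ j = 1 := by linear_combination -h
    have h2 : ‖x‖ * ‖q‖ ^ j = 1 := by rw [← norm_pow, ← norm_mul, h1, norm_one]
    have h3 : ‖q‖ ^ j ≤ 1 := pow_le_one₀ (norm_nonneg _) hq.le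
    nlinarith [norm_nonneg x]

lemma differentiable_qpi {q : ℂ} (hq : ‖q‖ < 1) : Differentiable ℂ (qpi q) := by
  intro x
  have hO : IsOpen (Metric.ball (0 : ℂ) (‖x‖ + 1)) := Metric.isOpen_ball
  have h := Summable.hasProdLocallyUniformlyOn_nat_one_add
    (f := fun (j : ℕ) (y : ℂ) => -(y * q ^ j)) hO
    ((summable_geometric_of_lt_one (norm_nonneg q) hq).mul_left (‖x‖ + 1))
    (.of_forall fun j y hy => by
      rw [norm_neg, norm_mul, norm_pow]
      have : ‖y‖ < ‖x‖ + 1 := by simpa using hy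
      gcongr) (fun j => by fun_prop)
  have hd : DifferentiableOn ℂ (qpi q) (Metric.ball (0 : ℂ) (‖x‖ + 1)) := by
    have := h.differentiableOn (.of_forall fun s => by
      simpa [Finset.prod_fn] using DifferentiableOn.finsetProd (fun _ _ => by fun_prop)) hO
    refine this.congr fun y _ => ?_
    simp [qpi, sub_eq_add_neg]
  exact (hd x (by simp)).differentiableAt (hO.mem_nhds (by simp))

/-- The function `G(z) = z (z², q z⁻²;q)_∞ / (az, bz, cz, dz, qa/z, qb/z, qc/z, qd/z;q)_∞`, whose
`q`-difference realises the contiguous relation at the level of integrands. -/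
def AWG (q a b c d z : ℂ) : ℂ :=
  z * qpi q (z ^ 2) * qpi q (q * z⁻¹ ^ 2) /
    (qpi q (a * z) * qpi q (q * (a * z⁻¹)) * qpi q (b * z) * qpi q (q * (b * z⁻¹)) *
      qpi q (c * z) * qpi q (q * (c * z⁻¹)) * qpi q (d * z) * qpi q (q * (d * z⁻¹)))

lemma norm_mul_lt_one {a z : ℂ} (ha : ‖a‖ < 1) (hz : ‖z‖ ≤ 1) : ‖a * z‖ < 1 := by
  rw [norm_mul]
  exact mul_lt_one_of_nonneg_of_lt_one_left (norm_nonneg _) ha hz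

lemma one_sub_ne_zero_of_norm {x : ℂ} (hx : ‖x‖ < 1) : 1 - x ≠ 0 := by
  intro h
  have : x = 1 := by linear_combination -h
  simp [this] at hx

lemma AWw_contiguous {q : ℂ} (hq0 : q ≠ 0) (hq : ‖q‖ < 1) {a b c d z : ℂ}
    (hA : ‖a‖ < 1) (hB : ‖b‖ < 1) (hC : ‖c‖ < 1) (hD : ‖d‖ < 1) (hz : ‖z‖ = 1) :
    (1 - a * b) * (1 - a * c) * (1 - a * d) * (AWw q a b c d z / z) -
        (1 - a * b * c * d) * (AWw q (q * a) b c d z / z) =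
      a * (z⁻¹ * AWG q a b c d z - z⁻¹ * AWG q a b c d (q * z)) := by
  have hz0 : z ≠ 0 := by rintro rfl; simp at hz
  have hz' : ‖z⁻¹‖ ≤ 1 := by simp [hz]
  have key : ∀ {x : ℂ}, ‖x‖ < 1 → 1 - x * z ≠ 0 ∧ 1 - x * z⁻¹ ≠ 0 ∧
      qpi q (q * (x * z)) ≠ 0 ∧ qpi q (q * (x * z⁻¹)) ≠ 0 := fun {x} hx => by
    refine ⟨one_sub_ne_zero_of_norm (norm_mul_lt_one hx hz.le),
      one_sub_ne_zero_of_norm (norm_mul_lt_one hx hz'), qpi_ne_zero hq ?_, qpi_ne_zero hq ?_⟩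
    · exact norm_mul_lt_one hq (norm_mul_lt_one hx hz.le).le
    · exact norm_mul_lt_one hq (norm_mul_lt_one hx hz').le
  obtain ⟨a1, a2, a3, a4⟩ := key hA
  obtain ⟨b1, b2, b3, b4⟩ := key hB
  obtain ⟨c1, c2, c3, c4⟩ := key hC
  obtain ⟨d1, d2, d3, d4⟩ := key hD
  have e1 : ∀ x : ℂ, x * (q * z) = q * (x * z) := fun x => by ring
  have e2 : ∀ x : ℂ, q * (x * (q * z)⁻¹) = x * z⁻¹ := fun x => by field_simp
  have e3 : ∀ x : ℂ, q * a * x = q * (a * x) := fun x => by ring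
  have e4 : (q * z) ^ 2 = q * (q * z ^ 2) := by ring
  have e5 : qpi q (q * (q * z)⁻¹ ^ 2) =
      (1 - q⁻¹ * z⁻¹ ^ 2) * ((1 - z⁻¹ ^ 2) * qpi q (q * z⁻¹ ^ 2)) := by
    rw [show q * (q * z)⁻¹ ^ 2 = q⁻¹ * z⁻¹ ^ 2 by field_simp, qpi_rec hq,
      show q * (q⁻¹ * z⁻¹ ^ 2) = z⁻¹ ^ 2 by field_simp, qpi_rec hq (z⁻¹ ^ 2)]
  have f1 : qpi q (z ^ 2) = (1 - z ^ 2) * ((1 - q * z ^ 2) * qpi q (q * (q * z ^ 2))) := by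
    rw [qpi_rec hq, qpi_rec hq (q * z ^ 2)]
  simp only [AWw, AWG, e1, e2, e3, e4, e5, f1]
  rw [qpi_rec hq (a * z), qpi_rec hq (a * z⁻¹), qpi_rec hq (b * z), qpi_rec hq (b * z⁻¹),
    qpi_rec hq (c * z), qpi_rec hq (c * z⁻¹), qpi_rec hq (d * z), qpi_rec hq (d * z⁻¹),
    qpi_rec hq (z⁻¹ ^ 2)]
  generalize qpi q (q * (a * z)) = A1 at *
  generalize qpi q (q * (b * z)) = B1 at *
  generalize qpi q (q * (c * z)) = C1 at *
  generalize qpi q (q * (d * z)) = D1 at *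
  generalize qpi q (q * (a * z⁻¹)) = A2 at *
  generalize qpi q (q * (b * z⁻¹)) = B2 at *
  generalize qpi q (q * (c * z⁻¹)) = C2 at *
  generalize qpi q (q * (d * z⁻¹)) = D2 at *
  generalize qpi q (q * (q * z ^ 2)) = U at *
  generalize qpi q (q * z⁻¹ ^ 2) = V at *
  have g : ∀ {x : ℂ}, 1 - x * z⁻¹ ≠ 0 → z - x ≠ 0 := fun {x} h h' => h (by
    have : x = z := by linear_combination -h'
    subst this; field_simp; simp)
  have g' : ∀ x : ℂ, 1 - x * z⁻¹ = (z - x) / z := fun x => by field_simp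
  have a5 := g a2
  have b5 := g b2
  have c5 := g c2
  have d5 := g d2
  simp only [g']
  field_simp
  ring

lemma differentiableAt_AWG {q : ℂ} (hq0 : q ≠ 0) (hq : ‖q‖ < 1) {a b c d z : ℂ}
    (hA : ‖a‖ < 1) (hB : ‖b‖ < 1) (hC : ‖c‖ < 1) (hD : ‖d‖ < 1) (hz1 : ‖z‖ ≤ 1)
    (hz2 : ‖q‖ ≤ ‖z‖) : DifferentiableAt ℂ (AWG q a b c d) z := by
  have hz0 : z ≠ 0 := by
    rintro rfl
    exact hq0 (by simpa using hz2)
  have hd := differentiable_qpi hq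
  have hqz : ‖q * z⁻¹‖ ≤ 1 := by
    rw [norm_mul, norm_inv, ← div_eq_mul_inv]
    exact div_le_one_of_le₀ hz2 (norm_nonneg _)
  have key : ∀ {x : ℂ}, ‖x‖ < 1 → qpi q (x * z) ≠ 0 ∧ qpi q (q * (x * z⁻¹)) ≠ 0 := fun {x} hx => by
    refine ⟨qpi_ne_zero hq (norm_mul_lt_one hx hz1), qpi_ne_zero hq ?_⟩
    rw [mul_left_comm]
    exact norm_mul_lt_one hx hqz
  have hi : DifferentiableAt ℂ (fun y : ℂ => y⁻¹) z := differentiableAt_inv hz0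
  have h1 : ∀ x, DifferentiableAt ℂ (fun y => qpi q (x * y)) z := fun x =>
    (hd _).comp z (differentiableAt_id.const_mul x)
  have h2 : ∀ x, DifferentiableAt ℂ (fun y => qpi q (q * (x * y⁻¹))) z := fun x =>
    (hd _).comp z ((hi.const_mul x).const_mul q)
  have h3 : DifferentiableAt ℂ (fun y => qpi q (y ^ 2)) z :=
    (hd _).comp z (differentiableAt_id.pow 2)
  have h4 : DifferentiableAt ℂ (fun y => qpi q (q * y⁻¹ ^ 2)) z :=
    (hd _).comp z ((hi.pow 2).const_mul q)
  unfold AWG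
  refine ((differentiableAt_id.mul h3).mul h4).div ((((((((h1 a).mul (h2 a)).mul (h1 b)).mul
    (h2 b)).mul (h1 c)).mul (h2 c)).mul (h1 d)).mul (h2 d)) ?_
  simp [key hA, key hB, key hC, key hD]

lemma circleIntegrable_AWw {q : ℂ} (hq : ‖q‖ < 1) {a b c d : ℂ}
    (hA : ‖a‖ < 1) (hB : ‖b‖ < 1) (hC : ‖c‖ < 1) (hD : ‖d‖ < 1) :
    CircleIntegrable (fun z => AWw q a b c d z / z) 0 1 := by
  refine ContinuousOn.circleIntegrable zero_le_one fun z hz => ContinuousAt.continuousWithinAt ?_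
  have hz1 : ‖z‖ = 1 := by simpa using hz
  have hz0 : z ≠ 0 := by rintro rfl; simp at hz1
  have hd := (differentiable_qpi hq).continuous
  have key : ∀ {x : ℂ}, ‖x‖ < 1 → qpi q (x * z) ≠ 0 ∧ qpi q (x * z⁻¹) ≠ 0 := fun {x} hx =>
    ⟨qpi_ne_zero hq (norm_mul_lt_one hx hz1.le),
      qpi_ne_zero hq (norm_mul_lt_one hx (by simp [hz1]))⟩
  have hi : ContinuousAt (fun y : ℂ => y⁻¹) z := continuousAt_inv₀ hz0
  have h1 : ∀ x, ContinuousAt (fun y => qpi q (x * y)) z := fun x =>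
    ContinuousAt.comp (g := qpi q) hd.continuousAt (continuousAt_const.mul continuousAt_id)
  have h2 : ∀ x, ContinuousAt (fun y => qpi q (x * y⁻¹)) z := fun x =>
    ContinuousAt.comp (g := qpi q) hd.continuousAt (continuousAt_const.mul hi)
  have h3 : ContinuousAt (fun y => qpi q (y ^ 2)) z :=
    ContinuousAt.comp (g := qpi q) hd.continuousAt (continuousAt_id.pow 2)
  have h4 : ContinuousAt (fun y => qpi q (y⁻¹ ^ 2)) z :=
    ContinuousAt.comp (g := qpi q) hd.continuousAt (hi.pow 2)
  unfold AWw
  refine ((h3.mul h4).div ((((((((h1 a).mul (h2 a)).mul (h1 b)).mul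
    (h2 b)).mul (h1 c)).mul (h2 c)).mul (h1 d)).mul (h2 d)) ?_).div continuousAt_id hz0
  simp [key hA, key hB, key hC, key hD]

lemma circleIntegral_AWG {q : ℝ} (hq0 : 0 < q) (hq1 : q < 1) {a b c d : ℂ}
    (hA : ‖a‖ < 1) (hB : ‖b‖ < 1) (hC : ‖c‖ < 1) (hD : ‖d‖ < 1) :
    (∮ z in C(0, 1), (z⁻¹ * AWG q a b c d z - z⁻¹ * AWG q a b c d (q * z))) = 0 := by
  have hqc : (q : ℂ) ≠ 0 := by exact_mod_cast hq0.ne'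
  have hqn : ‖(q : ℂ)‖ = q := by simp [abs_of_pos hq0]
  have hqn1 : ‖(q : ℂ)‖ < 1 := by rwa [hqn]
  have hdiff : ∀ z : ℂ, ‖z‖ ≤ 1 → q ≤ ‖z‖ → DifferentiableAt ℂ (AWG q a b c d) z := fun z h1 h2 =>
    differentiableAt_AWG hqc hqn1 hA hB hC hD h1 (by rwa [hqn])
  have h := Complex.circleIntegral_sub_center_inv_smul_eq_of_differentiable_on_annulus_off_countable
    (c := 0) (f := AWG q a b c d) hq0 hq1.le Set.countable_empty
    (fun z hz => (hdiff z (by simpa using hz.1)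
      (by simpa using hz.2)).continuousAt.continuousWithinAt)
    (fun z hz => hdiff z (by simpa using (Metric.ball_subset_closedBall hz.1.1))
      (by
        have := hz.1.2
        simp only [Metric.mem_closedBall, dist_zero_right, not_le] at this
        exact this.le))
  -- Rescaling the circle `|z| = q` to the unit circle; `dz / z` is invariant.
  have hscale : (∮ z in C(0, q), (z - 0)⁻¹ • AWG q a b c d z) =
      ∮ z in C(0, 1), z⁻¹ * AWG q a b c d (q * z) := by
    simp only [circleIntegral, deriv_circleMap, sub_zero, smul_eq_mul]
    congr 1
    ext θ
    have e : circleMap 0 q θ = q * circleMap 0 1 θ := by simp [circleMap]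
    have h0 : circleMap 0 1 θ ≠ 0 := circleMap_ne_center one_ne_zero
    rw [e]
    field_simp
  have hne : ∀ z ∈ Metric.sphere (0 : ℂ) 1, ‖z‖ = 1 ∧ z ≠ 0 := fun z hz => by
    have : ‖z‖ = 1 := by simpa using hz
    exact ⟨this, by rintro rfl; simp at this⟩
  rw [circleIntegral.integral_sub, ← hscale, ← h]
  · simp
  · refine ContinuousOn.circleIntegrable zero_le_one fun z hz =>
      ContinuousAt.continuousWithinAt ?_
    obtain ⟨h1, h0⟩ := hne z hz
    exact (continuousAt_inv₀ h0).mul (hdiff z h1.le (by rw [h1]; exact hq1.le)).continuousAt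
  · refine ContinuousOn.circleIntegrable zero_le_one fun z hz =>
      ContinuousAt.continuousWithinAt ?_
    obtain ⟨h1, h0⟩ := hne z hz
    have hn : ‖(q : ℂ) * z‖ = q := by rw [norm_mul, h1, hqn, mul_one]
    have hg := (hdiff (q * z) (by rw [hn]; exact hq1.le) hn.ge).continuousAt
    exact (continuousAt_inv₀ h0).mul
      (ContinuousAt.comp (f := fun y : ℂ => (q : ℂ) * y) hg (by fun_prop))

/-- Contiguous relation for the Askey-Wilson integral:
`I_{a,b,c,d} = ((1-abcd)/((1-ab)(1-ac)(1-ad))) I_{qa,b,c,d}` for `|a|,|b|,|c|,|d|<1`. -/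
theorem stmt17 (q : ℝ) (hq0 : 0 < q) (hq1 : q < 1) (a b c d : ℂ)
    (hA : ‖a‖ < 1) (hB : ‖b‖ < 1) (hC : ‖c‖ < 1) (hD : ‖d‖ < 1) :
    AWI (q : ℂ) a b c d =
      (1 - a * b * c * d) / ((1 - a * b) * (1 - a * c) * (1 - a * d)) *
        AWI (q : ℂ) ((q : ℂ) * a) b c d := by
  have hqc : (q : ℂ) ≠ 0 := by exact_mod_cast hq0.ne'
  have hqn1 : ‖(q : ℂ)‖ < 1 := by simpa [abs_of_pos hq0] using hq1
  have hab : 1 - a * b ≠ 0 := one_sub_ne_zero_of_norm (norm_mul_lt_one hA hB.le)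
  have hac : 1 - a * c ≠ 0 := one_sub_ne_zero_of_norm (norm_mul_lt_one hA hC.le)
  have had : 1 - a * d ≠ 0 := one_sub_ne_zero_of_norm (norm_mul_lt_one hA hD.le)
  have hI : CircleIntegrable (fun z => (1 - a * b) * (1 - a * c) * (1 - a * d) *
      (AWw q a b c d z / z)) 0 1 :=
    (circleIntegrable_AWw hqn1 hA hB hC hD).const_mul _
  have hI' : CircleIntegrable (fun z => (1 - a * b * c * d) *
      (AWw q (q * a) b c d z / z)) 0 1 :=
    (circleIntegrable_AWw hqn1 (norm_mul_lt_one hqn1 hA.le) hB hC hD).const_mul _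
  have h1 : (1 - a * b) * (1 - a * c) * (1 - a * d) *
        (∮ z in C(0, 1), AWw q a b c d z / z) -
      (1 - a * b * c * d) * (∮ z in C(0, 1), AWw q (q * a) b c d z / z) = 0 := by
    rw [← circleIntegral.integral_const_mul, ← circleIntegral.integral_const_mul,
      ← circleIntegral.integral_sub hI hI',
      circleIntegral.integral_congr zero_le_one fun z hz =>
        AWw_contiguous hqc hqn1 hA hB hC hD (by simpa using hz),
      circleIntegral.integral_const_mul, circleIntegral_AWG hq0 hq1 hA hB hC hD, mul_zero]
  unfold AWI
  rw [div_mul_eq_mul_div, eq_div_iff (by simp [hab, hac, had])]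
  linear_combination (2 * (Real.pi : ℂ) * Complex.I)⁻¹ * h1
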